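/- Let β > 1, ζ > 1, α > 0, C > 0, q ≥ 0 with β^{1−ζ}·(1 + q) < 1, let h > 0, n ≥ 2, γ ∈ (0, 1], and set C_ζ = 1 / (1 − β^{1−ζ}·(1 + q)). Suppose m̄ > (C·C_ζ/γ)^{1/α} and that positive real numbers m_2, …, m_n satisfy m_k^α ≥ m̄^α · β^{ζ(n−k)} for k = 2, …, n. If nonnegative real numbers e_1, …, e_n satisfy e_1 = 0 and e_{k+1} ≤ (1 + q)·e_k + C·β^{n−k−1}·h / m_{k+1}^α for k = 1, …, n−1, then e_n ≤ (C·C_ζ/m̄^α)·h, and in particular e_n ≤ γ·h. -/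

import Mathlib

/-- Abstract form of the final accuracy estimate of Theorem 3.4 for the cascadic
multigrid method: under the recursion
`e (k+1) ≤ (1+q) e k + C β^(n-k-1) h / m (k+1)^α` with `e 1 = 0`,
smoothing numbers `m_k^α ≥ m̄^α β^(ζ(n-k))` and
`m̄ > (C C_ζ / γ)^(1/α)` where `C_ζ = 1 / (1 - β^(1-ζ)(1+q))`,
one has `e n ≤ (C C_ζ / m̄^α) h` and in particular `e n ≤ γ h`. -/
theorem stmt4 (β ζ α C q h γ mbar : ℝ) (n : ℕ) (m e : ℕ → ℝ)
    (hβ : 1 < β) (hζ : 1 < ζ) (hα : 0 < α) (hC : 0 < C) (hq : 0 ≤ q)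
    (hsmall : β ^ (1 - ζ) * (1 + q) < 1)
    (hh : 0 < h) (hn : 2 ≤ n) (hγ : γ ∈ Set.Ioc (0 : ℝ) 1)
    (Cζ : ℝ) (hCζ : Cζ = 1 / (1 - β ^ (1 - ζ) * (1 + q)))
    (hmbar : (C * Cζ / γ) ^ (1 / α) < mbar)
    (hm_pos : ∀ k, 2 ≤ k → k ≤ n → 0 < m k)
    (hm : ∀ k, 2 ≤ k → k ≤ n → mbar ^ α * β ^ (ζ * ((n - k : ℕ) : ℝ)) ≤ m k ^ α)
    (he_nonneg : ∀ k, 1 ≤ k → k ≤ n → 0 ≤ e k)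
    (he1 : e 1 = 0)
    (hrec : ∀ k, 1 ≤ k → k ≤ n - 1 →
      e (k + 1) ≤ (1 + q) * e k + C * β ^ (n - k - 1) * h / m (k + 1) ^ α) :
    e n ≤ C * Cζ / mbar ^ α * h ∧ e n ≤ γ * h := by
  have hβ0 : 0 < β := by linarith
  obtain ⟨hγ0, hγ1⟩ := hγ
  set r := β ^ (1 - ζ) with hr
  have hr0 : 0 < r := Real.rpow_pos_of_pos hβ0 _
  have hd : 0 < 1 - r * (1 + q) := by linarith
  have hCζ0 : 0 < Cζ := by rw [hCζ]; positivity
  have hfix : (1 + q) * r * Cζ + 1 = Cζ := by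
    have h1 : Cζ * (1 - r * (1 + q)) = 1 := by
      rw [hCζ]; exact one_div_mul_cancel hd.ne'
    linarith
  have hX : 0 < C * Cζ / γ := by positivity
  have hX1 : 0 < (C * Cζ / γ) ^ (1 / α) := Real.rpow_pos_of_pos hX _
  have hmb : 0 < mbar := hX1.trans hmbar
  have hM : C * Cζ / γ < mbar ^ α := by
    have h1 := Real.rpow_lt_rpow hX1.le hmbar hα
    rwa [← Real.rpow_mul hX.le, one_div_mul_cancel hα.ne', Real.rpow_one] at h1
  set M := mbar ^ α with hMdef
  have hM0 : 0 < M := hX.trans hM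
  have key : ∀ k, 1 ≤ k → k ≤ n → e k ≤ C * h / M * r ^ (n - k) * Cζ := by
    intro k hk
    induction k, hk using Nat.le_induction with
    | base => intro _; rw [he1]; positivity
    | succ k hk ih =>
      intro hkn
      have ih := ih (by omega)
      have h1 := hrec k hk (by omega)
      have h2 := hm (k + 1) (by omega) hkn
      obtain ⟨j, hj⟩ : ∃ j, n - (k + 1) = j := ⟨_, rfl⟩
      have hj1 : n - k = j + 1 := by omega
      have hj2 : n - k - 1 = j := by omega
      rw [hj] at h2
      rw [hj1] at ih
      rw [hj2] at h1
      rw [hj]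
      have hB : 0 < β ^ (ζ * (j : ℝ)) := Real.rpow_pos_of_pos hβ0 _
      have hrj : β ^ j = r ^ j * β ^ (ζ * (j : ℝ)) := by
        rw [hr, ← Real.rpow_natCast, ← Real.rpow_natCast, ← Real.rpow_mul hβ0.le,
          ← Real.rpow_add hβ0]
        congr 1; ring
      have h3 : C * β ^ j * h / m (k + 1) ^ α ≤ C * h / M * r ^ j := by
        calc C * β ^ j * h / m (k + 1) ^ α
            ≤ C * β ^ j * h / (M * β ^ (ζ * (j : ℝ))) := by gcongr
          _ = C * h / M * r ^ j := by rw [hrj]; field_simp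
      calc e (k + 1) ≤ (1 + q) * (C * h / M * r ^ (j + 1) * Cζ) + C * h / M * r ^ j :=
            h1.trans (by gcongr)
        _ = C * h / M * r ^ j * ((1 + q) * r * Cζ + 1) := by ring
        _ = C * h / M * r ^ j * Cζ := by rw [hfix]
  have hfin : e n ≤ C * Cζ / M * h := by
    refine (key n (by omega) le_rfl).trans_eq ?_
    rw [Nat.sub_self]; ring
  refine ⟨hfin, hfin.trans ?_⟩
  have : C * Cζ / M ≤ γ := by
    rw [div_lt_iff₀ hγ0] at hM
    rw [div_le_iff₀ hM0]; linarith
  gcongr
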